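/- Let H be the complete s-uniform t-partite hypergraph with sides V_1, …, V_t, and in R = K[x_v : v ∈ V] let J = ⋂_{e ∈ E(H)} P_e, where P_e is the ideal generated by the variables {x_v : v ∈ e} (J is the Alexander dual of the edge ideal I(H)). Then the minimal number of generators of J equals the height of J if and only if t = s. -/

import Mathlib

open Finset

/-- The vertex set `V = V_1 ∪ ⋯ ∪ V_t` of the multipartite hypergraph with sides `Vs`. -/
def vertexSet {α : Type*} [DecidableEq α] {t : ℕ} (Vs : Fin t → Finset α) : Finset α :=
  Finset.univ.biUnion Vs

/-- `e` is an edge of the complete `s`-uniform `t`-partite hypergraph with sides `Vs`: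
`e ⊆ V`, `|e| = s`, and `|e ∩ V_i| ≤ 1` for every side. -/
def IsEdge {α : Type*} [DecidableEq α] {t : ℕ} (Vs : Fin t → Finset α) (s : ℕ)
    (e : Finset α) : Prop :=
  e ⊆ vertexSet Vs ∧ e.card = s ∧ ∀ i : Fin t, (e ∩ Vs i).card ≤ 1

/-- `F` is an independent set: a subset of `V` containing no edge. -/
def Indep {α : Type*} [DecidableEq α] {t : ℕ} (Vs : Fin t → Finset α) (s : ℕ)
    (F : Finset α) : Prop :=
  F ⊆ vertexSet Vs ∧ ∀ e : Finset α, IsEdge Vs s e → ¬ e ⊆ F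

/-- The edge ideal `I(H) = (∏_{v ∈ e} x_v : e ∈ E(H))` of the complete `s`-uniform
`t`-partite hypergraph, in the polynomial ring `K[x_v : v ∈ α]`. -/
noncomputable def edgeIdeal (K : Type*) [Field K] {α : Type*} [DecidableEq α] {t : ℕ}
    (Vs : Fin t → Finset α) (s : ℕ) : Ideal (MvPolynomial α K) :=
  Ideal.span {m : MvPolynomial α K |
    ∃ e : Finset α, IsEdge Vs s e ∧ m = ∏ v ∈ e, MvPolynomial.X v}

/-- The height of an ideal: the infimum of the heights (in the prime spectrum, ordered
by inclusion) of the primes minimal over it. -/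
noncomputable def idealHeight {R : Type*} [CommRing R] (I : Ideal R) : ℕ∞ :=
  ⨅ (p : PrimeSpectrum R) (_ : p.asIdeal ∈ I.minimalPrimes), Order.height p

/-- The minimal number of generators of an ideal: the least cardinality of a (finite)
generating set. -/
noncomputable def minNumGens {R : Type*} [CommRing R] (I : Ideal R) : ℕ :=
  sInf {n : ℕ | ∃ G : Finset R, G.card = n ∧ Ideal.span (G : Set R) = I}

/-- The Alexander dual of the edge ideal: `J = ⋂_{e ∈ E(H)} P_e`, where `P_e` is the
ideal generated by the variables `x_v`, `v ∈ e`. -/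
noncomputable def alexanderDualIdeal (K : Type*) [Field K] {α : Type*} [DecidableEq α]
    {t : ℕ} (Vs : Fin t → Finset α) (s : ℕ) : Ideal (MvPolynomial α K) :=
  ⨅ (e : Finset α) (_ : IsEdge Vs s e),
    Ideal.span ((fun v => (MvPolynomial.X v : MvPolynomial α K)) '' (e : Set α))

/-! A monomial lies in `J` iff its support meets every edge, and some edge avoids a set `T` of
vertices iff at least `s` sides are not contained in `T`. Hence `J` is generated by the products of
all variables in `t + 1 - s` sides. These monomials form an antichain, so they are a minimal
generating set, with `t.choose (t + 1 - s)` elements. On the other hand every `P_e` has height `s`,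
and so has `J`. For `2 ≤ s ≤ t` the binomial coefficient equals `s` only when `t = s`. -/

section NumberOfGenerators

open MvPolynomial

variable {σ R : Type*}

theorem coeff_mul_of_mem_span_monomial [CommSemiring R] {A : Set (σ →₀ ℕ)}
    (hA : IsAntichain (· ≤ ·) A) {a : σ →₀ ℕ} (ha : a ∈ A) {f : MvPolynomial σ R}
    (hf : f ∈ Ideal.span ((fun m => monomial m (1 : R)) '' A)) (g : MvPolynomial σ R) :
    coeff a (g * f) = constantCoeff g * coeff a f := by
  classical
  have eq_of_le : ∀ m ∈ f.support, m ≤ a → m = a := by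
    intro m hm hma
    obtain ⟨b, hb, hbm⟩ := mem_ideal_span_monomial_image.1 hf m hm
    exact le_antisymm hma (hA.eq hb ha (hbm.trans hma) ▸ hbm)
  rw [coeff_mul, constantCoeff_eq]
  refine Finset.sum_eq_single_of_mem (0, a) (by simp) fun ⟨x, y⟩ hxy hne => ?_
  replace hxy : x + y = a := HasAntidiagonal.mem_antidiagonal.1 hxy
  change coeff x g * coeff y f = 0
  by_cases hy : y ∈ f.support
  · obtain rfl : y = a := eq_of_le y hy (hxy ▸ le_add_self)
    exact (hne (Prod.ext (add_eq_right.1 hxy) rfl)).elim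
  · rw [notMem_support_iff.1 hy, mul_zero]

/-- The coefficients of a polynomial of the monomial ideal `I` at the exponents in an antichain `A`
generating `I`. It is semilinear over `constantCoeff`, since the product of a polynomial without
constant term and an element of `I` has no monomial with exponent in `A`; so it plays the role of
the reduction of `I` modulo the ideal of the variables. -/
noncomputable def antichainCoeff [CommSemiring R] {A : Set (σ →₀ ℕ)}
    (hA : IsAntichain (· ≤ ·) A) :
    Ideal.span ((fun m => monomial m (1 : R)) '' A)
      →ₛₗ[(constantCoeff : MvPolynomial σ R →+* R)] (A → R) where
  toFun f a := coeff a f.1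
  map_add' f g := by ext a; exact coeff_add a.1 f.1 g.1
  map_smul' g f := by ext a; exact coeff_mul_of_mem_span_monomial hA a.2 f.2 g

theorem antichainCoeff_surjective [CommSemiring R] {A : Set (σ →₀ ℕ)} [Finite A]
    (hA : IsAntichain (· ≤ ·) A) : Function.Surjective (antichainCoeff (R := R) hA) := by
  classical
  have := Fintype.ofFinite A
  intro c
  have hmem : ∑ a : A, monomial a.1 (c a) ∈ Ideal.span ((fun m => monomial m (1 : R)) '' A) := by
    refine sum_mem fun a _ => ?_
    rw [← mul_one (c a), ← C_mul_monomial]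
    exact Ideal.mul_mem_left _ _ (Ideal.subset_span ⟨a, a.2, rfl⟩)
  refine ⟨⟨_, hmem⟩, funext fun b => ?_⟩
  simp [antichainCoeff, coeff_sum, coeff_monomial, Subtype.coe_inj]

theorem minNumGens_eq_spanFinrank [CommRing R] (I : Ideal R) : minNumGens I = I.spanFinrank := by
  rw [Submodule.spanFinrank_eq_iInf, minNumGens, iInf]
  congr 1
  ext n
  simp [and_comm, Ideal.span]

theorem minNumGens_span_monomial [CommRing R] [Nontrivial R] {A : Finset (σ →₀ ℕ)}
    (hA : IsAntichain (· ≤ ·) (A : Set (σ →₀ ℕ))) :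
    minNumGens (Ideal.span ((fun m => monomial m (1 : R)) '' (A : Set (σ →₀ ℕ)))) = #A := by
  have : RingHomSurjective (constantCoeff : MvPolynomial σ R →+* R) :=
    ⟨fun r => ⟨C r, constantCoeff_C σ r⟩⟩
  set I := Ideal.span ((fun m => monomial m (1 : R)) '' (A : Set (σ →₀ ℕ)))
  have hI : I.FG := Submodule.fg_span (A.finite_toSet.image _)
  rw [minNumGens_eq_spanFinrank]
  apply le_antisymm
  · calc I.spanFinrank
        ≤ ((fun m => monomial m (1 : R)) '' (A : Set (σ →₀ ℕ))).ncard :=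
          Submodule.spanFinrank_span_le_ncard_of_finite (A.finite_toSet.image _)
      _ ≤ (A : Set (σ →₀ ℕ)).ncard := Set.ncard_image_le A.finite_toSet
      _ = #A := Set.ncard_coe_finset A
  · calc #A = Module.finrank R (↥(A : Set (σ →₀ ℕ)) → R) := by simp
      _ = (⊤ : Submodule R (↥(A : Set (σ →₀ ℕ)) → R)).spanFinrank :=
          Module.finrank_eq_spanFinrank_of_free
      _ = (Submodule.map (antichainCoeff hA) (⊤ : Submodule (MvPolynomial σ R) I)).spanFinrank := by
          rw [Submodule.map_top, LinearMap.range_eq_top.2 (antichainCoeff_surjective hA)]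
      _ ≤ (⊤ : Submodule (MvPolynomial σ R) I).spanFinrank :=
          Submodule.spanFinrank_map_le_of_fg _ ((Submodule.fg_top I).2 hI)
      _ = I.spanFinrank := Submodule.spanFinrank_top I

end NumberOfGenerators

section Height

variable {R : Type*} [CommRing R]

theorem idealHeight_eq_height (I : Ideal R) : idealHeight I = I.height := by
  rw [Ideal.height_eq_inf_minimalPrimes, idealHeight]
  simp only [← PrimeSpectrum.height_eq_orderHeight]
  refine le_antisymm (le_iInf₂ fun P hP => ?_) (le_iInf₂ fun p hp => iInf₂_le p.asIdeal hp)
  exact iInf₂_le (⟨P, hP.1.1⟩ : PrimeSpectrum R) hP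

theorem height_biInf {ι : Type*} {s : Set ι} (hs : s.Finite) (I : ι → Ideal R) :
    (⨅ i ∈ s, I i).height = ⨅ i ∈ s, (I i).height := by
  refine le_antisymm (le_iInf₂ fun i hi => Ideal.height_mono (iInf₂_le i hi)) ?_
  rw [Ideal.height_eq_inf_minimalPrimes]
  refine le_iInf₂ fun P hP => ?_
  obtain ⟨i, hi, hiP⟩ : ∃ i ∈ hs.toFinset, I i ≤ P := by
    rw [← hP.1.1.inf_le', Finset.inf_eq_iInf]
    simpa only [Set.Finite.mem_toFinset] using hP.1.2
  exact (iInf₂_le i (hs.mem_toFinset.1 hi)).trans (Ideal.height_mono hiP)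

end Height

section VariableIdeals

open MvPolynomial

variable {σ R : Type*} [CommRing R]

theorem X_mem_span_X_image_iff [Nontrivial R] {s : Set σ} {i : σ} :
    (X i : MvPolynomial σ R) ∈ Ideal.span (X '' s) ↔ i ∈ s := by
  classical
  rw [mem_ideal_span_X_image, support_X]
  simp [Finsupp.single_apply]

theorem idealOfVars_eq_ker_constantCoeff :
    idealOfVars σ R = RingHom.ker (constantCoeff : MvPolynomial σ R →+* R) := by
  ext f
  rw [← pow_one (idealOfVars σ R), mem_pow_idealOfVars_iff', RingHom.mem_ker, constantCoeff_eq]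
  simp [Finsupp.degree_eq_zero_iff]

theorem isPrime_idealOfVars [IsDomain R] : (idealOfVars σ R).IsPrime :=
  idealOfVars_eq_ker_constantCoeff (σ := σ) (R := R) ▸ RingHom.ker_isPrime _

/-- The polynomial ring in the variables of `σ` as the polynomial ring in the variables of `s` over
the polynomial ring in the remaining variables, so that the variables of `s` generate the ideal of
all variables. -/
noncomputable def splitVariables (R : Type*) [CommRing R] (s : Set σ) :
    MvPolynomial σ R ≃+* MvPolynomial s (MvPolynomial ↥sᶜ R) :=
  letI := Classical.decPred (· ∈ s)
  (renameEquiv R (Equiv.Set.sumCompl s).symm).toRingEquiv.trans (sumRingEquiv R s ↥sᶜ)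

theorem splitVariables_X {s : Set σ} (i : s) :
    splitVariables R s (X (i : σ)) = X i := by
  simp [splitVariables, Equiv.Set.sumCompl_symm_apply]

theorem map_splitVariables_span_X_image (s : Set σ) :
    (Ideal.span (X '' s)).map (splitVariables R s) = idealOfVars s (MvPolynomial ↥sᶜ R) := by
  rw [Ideal.map_span, Set.image_image, Set.image_eq_range]
  simp only [splitVariables_X, idealOfVars]

theorem isPrime_span_X_image [IsDomain R] (s : Set σ) :
    (Ideal.span (X '' s : Set (MvPolynomial σ R))).IsPrime := by
  have := isPrime_idealOfVars (σ := s) (R := MvPolynomial ↥sᶜ R)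
  rw [← Ideal.comap_map_of_bijective (splitVariables R s) (splitVariables R s).bijective
      (I := Ideal.span (X '' s)), map_splitVariables_span_X_image]
  exact Ideal.comap_isPrime _ _

theorem card_le_height_span_X_image [IsDomain R] (s : Finset σ) :
    (#s : ℕ∞) ≤ (Ideal.span (X '' (s : Set σ) : Set (MvPolynomial σ R))).height := by
  classical
  induction s using Finset.induction_on with
  | empty => simp
  | insert i s hi ih =>
    have := isPrime_span_X_image (R := R) (s : Set σ)
    have := isPrime_span_X_image (R := R) ((insert i s : Finset σ) : Set σ)
    have hlt : Ideal.span (X '' (s : Set σ) : Set (MvPolynomial σ R)) <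
        Ideal.span (X '' ((insert i s : Finset σ) : Set σ)) := by
      refine SetLike.lt_iff_le_and_exists.2
        ⟨Ideal.span_mono (Set.image_mono (by simp)), X i, ?_, ?_⟩
      · simp [X_mem_span_X_image_iff]
      · simpa [X_mem_span_X_image_iff] using hi
    rw [card_insert_of_notMem hi, Nat.cast_add_one]
    exact (add_le_add_left ih 1).trans (Ideal.height_add_one_le_of_lt_of_isPrime hlt)

theorem height_idealOfVars_le [IsDomain R] [Finite σ] :
    (idealOfVars σ R).height ≤ Nat.card σ := by
  -- Inverting the nonzero constants preserves the height and makes the ring Noetherian, so that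
  -- Krull's height theorem applies.
  let F := FractionRing R
  let _ : Algebra (MvPolynomial σ R) (MvPolynomial σ F) := MvPolynomial.algebraMvPolynomial
  have := isPrime_idealOfVars (σ := σ) (R := R)
  have := isPrime_idealOfVars (σ := σ) (R := F)
  have hmap : (idealOfVars σ R).map (algebraMap _ (MvPolynomial σ F)) = idealOfVars σ F := by
    rw [Ideal.map_span, ← Set.range_comp]
    congr 2
    ext1 i
    exact map_X (algebraMap R F) i
  have hdisj : Disjoint (((nonZeroDivisors R).map (C (σ := σ)) : Submonoid _) : Set _)
      (idealOfVars σ R : Set (MvPolynomial σ R)) := by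
    rw [idealOfVars_eq_ker_constantCoeff, Set.disjoint_left]
    rintro _ ⟨r, hr, rfl⟩ hker
    exact nonZeroDivisors.ne_zero hr (by simpa using hker)
  rw [← IsLocalization.height_map_of_disjoint (S := MvPolynomial σ F) _ _ hdisj, hmap]
  calc (idealOfVars σ F).height ≤ (idealOfVars σ F).spanFinrank :=
        Ideal.height_le_spanFinrank _ Ideal.IsPrime.ne_top'
    _ ≤ (Set.range (X : σ → MvPolynomial σ F)).ncard := by
        exact_mod_cast Submodule.spanFinrank_span_le_ncard_of_finite (Set.finite_range _)
    _ = Nat.card σ := by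
        rw [← Set.image_univ, Set.ncard_image_of_injective _ X_injective, Set.ncard_univ]

theorem height_span_X_image [IsDomain R] (s : Finset σ) :
    (Ideal.span (X '' (s : Set σ) : Set (MvPolynomial σ R))).height = #s := by
  refine le_antisymm ?_ (card_le_height_span_X_image s)
  rw [← RingEquiv.height_map (splitVariables R (s : Set σ)), map_splitVariables_span_X_image]
  simpa using height_idealOfVars_le (σ := (s : Set σ)) (R := MvPolynomial ↥(s : Set σ)ᶜ R)

end VariableIdeals

section Transversals

variable {α : Type*} [DecidableEq α] {t s : ℕ} {Vs : Fin t → Finset α}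

theorem finite_setOf_isEdge (Vs : Fin t → Finset α) (s : ℕ) : {e | IsEdge Vs s e}.Finite :=
  (vertexSet Vs).powerset.finite_toSet.subset fun _ he => mem_powerset.2 he.1

theorem isEdge_image_of_mem (hdisj : Pairwise (Function.onFun Disjoint Vs)) {B : Finset (Fin t)}
    {c : B → α} (hc : ∀ i : B, c i ∈ Vs i) : IsEdge Vs #B (univ.image c) := by
  have eq_of_mem {j : B} {i : Fin t} (h : c j ∈ Vs i) : (j : Fin t) = i :=
    hdisj.eq (not_disjoint_iff.2 ⟨c j, hc j, h⟩)
  refine ⟨?_, ?_, fun i => card_le_one.2 ?_⟩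
  · exact image_subset_iff.2 fun i _ => mem_biUnion.2 ⟨i, mem_univ _, hc i⟩
  · have hinj : Function.Injective c := fun i j hij => Subtype.ext (eq_of_mem (hij ▸ hc j))
    simp [card_image_of_injective _ hinj]
  · simp only [mem_inter, mem_image, mem_univ, true_and]
    rintro _ ⟨⟨j, rfl⟩, hj⟩ _ ⟨⟨k, rfl⟩, hk⟩
    rw [Subtype.ext ((eq_of_mem hj).trans (eq_of_mem hk).symm)]

theorem IsEdge.card_le_card_sides {e T : Finset α} (he : IsEdge Vs s e) (heT : Disjoint e T) :
    s ≤ #{i | ¬ Vs i ⊆ T} := by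
  have hcover : e ⊆ ({i | ¬ Vs i ⊆ T} : Finset (Fin t)).biUnion fun i => e ∩ Vs i := by
    intro v hv
    obtain ⟨i, -, hi⟩ := mem_biUnion.1 (he.1 hv)
    have hiT : ¬ Vs i ⊆ T := fun h => disjoint_left.1 heT hv (h hi)
    exact mem_biUnion.2 ⟨i, by simpa using hiT, mem_inter.2 ⟨hv, hi⟩⟩
  calc s = #e := he.2.1.symm
    _ ≤ _ := card_le_card hcover
    _ ≤ #{i | ¬ Vs i ⊆ T} * 1 := card_biUnion_le_card_mul _ _ 1 fun i _ => he.2.2 i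
    _ = #{i | ¬ Vs i ⊆ T} := mul_one _

theorem exists_isEdge_disjoint_iff (hdisj : Pairwise (Function.onFun Disjoint Vs)) (T : Finset α) :
    (∃ e, IsEdge Vs s e ∧ Disjoint e T) ↔ s ≤ #{i | ¬ Vs i ⊆ T} := by
  refine ⟨fun ⟨e, he, heT⟩ => he.card_le_card_sides heT, fun h => ?_⟩
  obtain ⟨B, hB, rfl⟩ := le_card_iff_exists_subset_card.1 h
  have hBT (i : B) : ∃ v ∈ Vs i, v ∉ T := not_subset.1 (mem_filter.1 (hB i.2)).2
  choose c hc hcT using hBT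
  refine ⟨univ.image c, isEdge_image_of_mem hdisj hc, disjoint_left.2 ?_⟩
  intro v hv
  obtain ⟨i, -, rfl⟩ := mem_image.1 hv
  exact hcT i

theorem exists_isEdge (hst : s ≤ t) (hdisj : Pairwise (Function.onFun Disjoint Vs))
    (hne : ∀ i, (Vs i).Nonempty) : ∃ e, IsEdge Vs s e := by
  have hsides : s ≤ #{i | ¬ Vs i ⊆ ∅} := by simpa [(hne _).ne_empty] using hst
  obtain ⟨e, he, -⟩ := (exists_isEdge_disjoint_iff hdisj ∅).2 hsides
  exact ⟨e, he⟩

theorem forall_isEdge_not_disjoint_iff (hdisj : Pairwise (Function.onFun Disjoint Vs))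
    (T : Finset α) :
    (∀ e, IsEdge Vs s e → ¬ Disjoint e T) ↔
      ∃ S ∈ powersetCard (t + 1 - s) univ, ∀ i ∈ S, Vs i ⊆ T := by
  have hcount : #{i | Vs i ⊆ T} + #{i | ¬ Vs i ⊆ T} = t := by
    simpa using card_filter_add_card_filter_not (s := (univ : Finset (Fin t))) (Vs · ⊆ T)
  calc (∀ e, IsEdge Vs s e → ¬ Disjoint e T) ↔ ¬ s ≤ #{i | ¬ Vs i ⊆ T} := by
        rw [← exists_isEdge_disjoint_iff hdisj T]
        push Not
        rfl
    _ ↔ t + 1 - s ≤ #{i | Vs i ⊆ T} := by omega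
    _ ↔ ∃ S ∈ powersetCard (t + 1 - s) univ, ∀ i ∈ S, Vs i ⊆ T := by
        rw [le_card_iff_exists_subset_card]
        refine exists_congr fun S => ?_
        rw [mem_powersetCard_univ, and_comm]
        exact and_congr_right fun _ => forall₂_congr fun i _ => mem_filter_univ i

end Transversals

section AlexanderDual

variable {α : Type*} [DecidableEq α] {t s : ℕ} {Vs : Fin t → Finset α}

/-- The exponent of the product of all variables lying in the sides indexed by `S`. -/
noncomputable def sideExponent (Vs : Fin t → Finset α) (S : Finset (Fin t)) : α →₀ ℕ :=
  Finsupp.indicator (S.biUnion Vs) fun _ _ => 1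

theorem support_sideExponent (S : Finset (Fin t)) :
    (sideExponent Vs S).support = S.biUnion Vs := by
  ext v
  simp [sideExponent]

theorem sideExponent_le_iff {S : Finset (Fin t)} {m : α →₀ ℕ} :
    sideExponent Vs S ≤ m ↔ ∀ i ∈ S, Vs i ⊆ m.support := by
  rw [← biUnion_subset]
  refine ⟨fun h => support_sideExponent (Vs := Vs) S ▸ Finsupp.support_mono h, fun h v => ?_⟩
  by_cases hv : v ∈ S.biUnion Vs
  · rw [sideExponent, Finsupp.indicator_of_mem hv]
    exact Nat.one_le_iff_ne_zero.2 (Finsupp.mem_support_iff.1 (h hv))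
  · simp only [sideExponent, Finsupp.indicator_of_notMem hv, zero_le]

theorem sideExponent_le_sideExponent_iff (hdisj : Pairwise (Function.onFun Disjoint Vs))
    (hne : ∀ i, (Vs i).Nonempty) {S T : Finset (Fin t)} :
    sideExponent Vs S ≤ sideExponent Vs T ↔ S ⊆ T := by
  rw [sideExponent_le_iff, support_sideExponent]
  refine ⟨fun h i hi => ?_, fun h i hi => subset_biUnion_of_mem Vs (h hi)⟩
  obtain ⟨v, hv⟩ := hne i
  obtain ⟨j, hj, hvj⟩ := mem_biUnion.1 (h i hi hv)
  rwa [hdisj.eq (not_disjoint_iff.2 ⟨v, hv, hvj⟩)]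

/-- The exponents of the minimal generators of the Alexander dual: the minimal vertex covers are the
unions of `t + 1 - s` sides. -/
noncomputable def coverExponents (Vs : Fin t → Finset α) (s : ℕ) : Finset (α →₀ ℕ) :=
  (powersetCard (t + 1 - s) univ).image (sideExponent Vs)

theorem isAntichain_coverExponents (hdisj : Pairwise (Function.onFun Disjoint Vs))
    (hne : ∀ i, (Vs i).Nonempty) :
    IsAntichain (· ≤ ·) (coverExponents Vs s : Set (α →₀ ℕ)) := by
  rw [coverExponents, coe_image]
  exact (Set.sized_powersetCard _ _).isAntichain.image_embedding
    (OrderEmbedding.ofMapLEIff _ fun _ _ => sideExponent_le_sideExponent_iff hdisj hne)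

theorem card_coverExponents (hdisj : Pairwise (Function.onFun Disjoint Vs))
    (hne : ∀ i, (Vs i).Nonempty) : #(coverExponents Vs s) = t.choose (t + 1 - s) := by
  have hinj : Function.Injective (sideExponent Vs) :=
    (OrderEmbedding.ofMapLEIff _ fun _ _ => sideExponent_le_sideExponent_iff hdisj hne).injective
  rw [coverExponents, card_image_of_injective _ hinj, card_powersetCard, card_fin]

variable (K : Type*) [Field K]

open MvPolynomial in
theorem alexanderDualIdeal_eq_span_monomial (hdisj : Pairwise (Function.onFun Disjoint Vs)) :
    alexanderDualIdeal K Vs s = Ideal.span ((fun m => monomial m (1 : K)) ''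
      (coverExponents Vs s : Set (α →₀ ℕ))) := by
  ext f
  have mem_prime_iff (e : Finset α) : f ∈ Ideal.span ((fun v => X v) '' (e : Set α)) ↔
      ∀ m ∈ f.support, ¬ Disjoint e m.support := by
    simp [mem_ideal_span_X_image, not_disjoint_iff]
  calc f ∈ alexanderDualIdeal K Vs s
      ↔ ∀ m ∈ f.support, ∀ e, IsEdge Vs s e → ¬ Disjoint e m.support := by
        simp only [alexanderDualIdeal, Submodule.mem_iInf, mem_prime_iff]
        exact ⟨fun h m hm e he => h e he m hm, fun h e he m hm => h m hm e he⟩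
    _ ↔ ∀ m ∈ f.support, ∃ a ∈ coverExponents Vs s, a ≤ m := by
        simp only [forall_isEdge_not_disjoint_iff hdisj, coverExponents, exists_mem_image,
          sideExponent_le_iff]
    _ ↔ _ := mem_ideal_span_monomial_image.symm

theorem minNumGens_alexanderDualIdeal (hdisj : Pairwise (Function.onFun Disjoint Vs))
    (hne : ∀ i, (Vs i).Nonempty) :
    minNumGens (alexanderDualIdeal K Vs s) = t.choose (t + 1 - s) := by
  rw [alexanderDualIdeal_eq_span_monomial K hdisj,
    minNumGens_span_monomial (isAntichain_coverExponents hdisj hne),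
    card_coverExponents hdisj hne]

theorem idealHeight_alexanderDualIdeal (hst : s ≤ t)
    (hdisj : Pairwise (Function.onFun Disjoint Vs)) (hne : ∀ i, (Vs i).Nonempty) :
    idealHeight (alexanderDualIdeal K Vs s) = s := by
  rw [idealHeight_eq_height]
  calc (alexanderDualIdeal K Vs s).height
      = ⨅ e ∈ {e | IsEdge Vs s e},
          (Ideal.span (MvPolynomial.X '' (e : Set α) : Set (MvPolynomial α K))).height :=
        height_biInf (finite_setOf_isEdge Vs s) _
    _ = ⨅ e ∈ {e | IsEdge Vs s e}, (s : ℕ∞) :=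
        biInf_congr fun e he => by rw [height_span_X_image, he.2.1]
    _ = s := biInf_const (exists_isEdge hst hdisj hne)

end AlexanderDual

theorem choose_add_one_sub_eq_iff {t s : ℕ} (hs : 2 ≤ s) (hst : s ≤ t) :
    t.choose (t + 1 - s) = s ↔ t = s := by
  refine ⟨fun h => ?_, fun h => by simp [h]⟩
  by_contra hne
  have hlt : s < t := by omega
  have : s < t.choose (t + 1 - s) :=
    calc s < s + s.choose 2 := Nat.lt_add_of_pos_right (Nat.choose_pos hs)
      _ = (s + 1).choose 2 := by rw [Nat.choose_succ_succ' s 1, Nat.choose_one_right]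
      _ = (s + 1).choose (s - 1) := Nat.choose_symm_of_eq_add (by omega)
      _ ≤ t.choose (s - 1) := Nat.choose_le_choose _ hlt
      _ = t.choose (t + 1 - s) := Nat.choose_symm_of_eq_add (by omega)
  exact this.ne' h

theorem alexander_dual_complete_intersection_iff_general
    (K : Type*) [Field K] {α : Type*} [DecidableEq α] {t s : ℕ} (hs : 2 ≤ s) (hst : s ≤ t)
    (Vs : Fin t → Finset α) (hdisj : Pairwise (Function.onFun Disjoint Vs))
    (hne : ∀ i : Fin t, (Vs i).Nonempty) :
    (minNumGens (alexanderDualIdeal K Vs s) : ℕ∞) =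
        idealHeight (alexanderDualIdeal K Vs s) ↔
      t = s := by
  rw [minNumGens_alexanderDualIdeal K hdisj hne, idealHeight_alexanderDualIdeal K hst hdisj hne,
    Nat.cast_inj, choose_add_one_sub_eq_iff hs hst]

/-- The minimal number of generators of the Alexander dual of the
edge ideal of the complete `s`-uniform `t`-partite hypergraph equals its height (i.e.
the Alexander dual is a complete intersection) if and only if `t = s`. -/
theorem alexander_dual_complete_intersection_iff
    (K : Type*) [Field K] {α : Type*} [DecidableEq α] [Fintype α] {t s : ℕ}
    (hs : 2 ≤ s) (hst : s ≤ t)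
    (Vs : Fin t → Finset α)
    (hdisj : ∀ i j : Fin t, i ≠ j → Disjoint (Vs i) (Vs j))
    (hne : ∀ i : Fin t, (Vs i).Nonempty)
    (huniv : vertexSet Vs = Finset.univ) :
    (minNumGens (alexanderDualIdeal K Vs s) : ℕ∞) =
        idealHeight (alexanderDualIdeal K Vs s) ↔
      t = s :=
  alexander_dual_complete_intersection_iff_general K hs hst Vs (fun i j => hdisj i j) hne
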